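/- Every zero of the polynomial P_m(z), whose generating function is ∑_{m≥0} P_m(z) t^m = 1/(t^4 z^2 + t^3(-2z-36) + t^2(49-2z) - 14t + 1), is a real number lying in the open interval (-∞, -9/4). -/

import Mathlib

open Polynomial

/-- A solution of a linear recurrence of order four with the initial values `0, 0, 0, 1` and
four distinct characteristic roots, in Lagrange form. -/
lemma linear_recurrence_lagrange {K : Type*} [Field K] {p : ℕ → K} {A B C D r₁ r₂ r₃ r₄ : K}
    (p0 : p 0 = 0) (p1 : p 1 = 0) (p2 : p 2 = 0) (p3 : p 3 = 1)
    (hp : ∀ n, p (n + 4) = A * p (n + 3) + B * p (n + 2) + C * p (n + 1) + D * p n)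
    (h₁ : r₁ ^ 4 = A * r₁ ^ 3 + B * r₁ ^ 2 + C * r₁ + D)
    (h₂ : r₂ ^ 4 = A * r₂ ^ 3 + B * r₂ ^ 2 + C * r₂ + D)
    (h₃ : r₃ ^ 4 = A * r₃ ^ 3 + B * r₃ ^ 2 + C * r₃ + D)
    (h₄ : r₄ ^ 4 = A * r₄ ^ 3 + B * r₄ ^ 2 + C * r₄ + D)
    (h12 : r₁ - r₂ ≠ 0) (h13 : r₁ - r₃ ≠ 0) (h14 : r₁ - r₄ ≠ 0)
    (h23 : r₂ - r₃ ≠ 0) (h24 : r₂ - r₄ ≠ 0) (h34 : r₃ - r₄ ≠ 0) (n : ℕ) :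
    p n = r₁ ^ n / ((r₁ - r₂) * (r₁ - r₃) * (r₁ - r₄))
      - r₂ ^ n / ((r₁ - r₂) * (r₂ - r₃) * (r₂ - r₄))
      + r₃ ^ n / ((r₁ - r₃) * (r₂ - r₃) * (r₃ - r₄))
      - r₄ ^ n / ((r₁ - r₄) * (r₂ - r₄) * (r₃ - r₄)) := by
  induction n using Nat.strong_induction_on with
  | _ n ih =>
    match n with
    | 0 => rw [p0]; field_simp; ring
    | 1 => rw [p1]; field_simp; ring
    | 2 => rw [p2]; field_simp; ring
    | 3 => rw [p3]; field_simp; ring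
    | n + 4 =>
      rw [hp, ih (n + 3) (by lia), ih (n + 2) (by lia), ih (n + 1) (by lia), ih n (by lia),
        pow_add r₁ n 4, pow_add r₂ n 4, pow_add r₃ n 4, pow_add r₄ n 4, h₁, h₂, h₃, h₄]
      ring

/-- A real polynomial of degree at most `k` which alternates in sign along `k + 1` decreasing
points below `c` has only real zeros, all of them below `c`. -/
lemma real_roots_of_alternating {p : ℝ[X]} {k : ℕ} {c : ℝ} (hdeg : p.natDegree ≤ k)
    (z : ℕ → ℝ) (hz : ∀ j < k, z (j + 1) < z j) (hc : ∀ j ≤ k, z j < c)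
    (hs : ∀ j ≤ k, 0 < (-1) ^ j * p.eval (z j)) {w : ℂ} (hw : aeval w p = 0) :
    w.im = 0 ∧ w.re < c := by
  have hroot : ∀ j, ∃ r, j < k → z (j + 1) < r ∧ r < z j ∧ p.eval r = 0 := by
    intro j
    by_cases hj : j < k
    · have h1 := hs j hj.le
      have h2 := hs (j + 1) hj
      have hcont : ContinuousOn (fun x => (-1) ^ j * p.eval x) (Set.Icc (z (j + 1)) (z j)) := by
        fun_prop
      obtain ⟨r, hr, hr0⟩ := intermediate_value_Ioo (hz j hj).le hcont
        (show (0 : ℝ) ∈ _ from ⟨by rw [pow_succ] at h2; linarith, h1⟩)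
      exact ⟨r, fun _ => ⟨hr.1, hr.2, by simpa using hr0⟩⟩
    · exact ⟨0, fun h => absurd h hj⟩
  choose r hr using hroot
  have hmono : ∀ i j, i ≤ j → j ≤ k → z j ≤ z i := by
    intro i j hij
    induction j, hij using Nat.le_induction with
    | base => exact fun _ => le_rfl
    | succ j _ ih => exact fun hj => (hz j hj).le.trans (ih (by lia))
  have hlt : ∀ i j, i < j → j < k → r j < r i := fun i j hij hj =>
    (hr j hj).2.1.trans_le ((hmono (i + 1) j hij hj.le).trans (hr i (hij.trans hj)).1.le)
  have hp0 : p ≠ 0 := by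
    rintro rfl
    simpa using hs 0 (by lia)
  have hpC : p.map (algebraMap ℝ ℂ) ≠ 0 := by
    simpa [Polynomial.map_eq_zero] using hp0
  set S : Finset ℂ := (Finset.range k).image (fun j => (r j : ℂ)) with hS
  have hcard : S.card = k := by
    rw [hS, Finset.card_image_of_injOn, Finset.card_range]
    intro i hi j hj hij
    simp only [Finset.coe_range, Set.mem_Iio, Complex.ofReal_inj] at hi hj hij
    rcases lt_trichotomy i j with h | h | h
    · exact absurd hij (hlt i j h hj).ne'
    · exact h
    · exact absurd hij (hlt j i h hi).ne
  have hwS : w ∈ S := by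
    by_contra hwS
    have hsub : (insert w S).val ⊆ (p.map (algebraMap ℝ ℂ)).roots := by
      intro v hv
      rw [Finset.mem_val, Finset.mem_insert] at hv
      rw [mem_roots hpC, IsRoot.def, eval_map_algebraMap]
      rcases hv with rfl | hv
      · exact hw
      · simp only [hS, Finset.mem_image, Finset.mem_range] at hv
        obtain ⟨j, hj, rfl⟩ := hv
        have := aeval_algebraMap_apply ℂ (r j) p
        simpa [(hr j hj).2.2] using this
    have := card_le_degree_of_subset_roots hsub
    rw [Finset.card_insert_of_notMem hwS, hcard, natDegree_map] at this
    lia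
  simp only [hS, Finset.mem_image, Finset.mem_range] at hwS
  obtain ⟨j, hj, rfl⟩ := hwS
  exact ⟨Complex.ofReal_im _, by simpa using (hr j hj).2.1.trans (hc j hj.le)⟩

/-- A continuous function with `f 0 = 0` that tends to a limit above `(k + 1/2) π` takes the
values `(j + 1/2) π`, `j ≤ k`, at increasing positive points. -/
lemma exists_increasing_preimages {f : ℝ → ℝ} (hf : Continuous f) (hf0 : f 0 = 0) {L : ℝ}
    (hL : Filter.Tendsto f Filter.atTop (nhds L)) (k : ℕ) (hk : (k + 1 / 2) * Real.pi < L) :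
    ∃ y : ℕ → ℝ, (∀ j < k, y j < y (j + 1)) ∧
      ∀ j ≤ k, 0 < y j ∧ f (y j) = (j + 1 / 2) * Real.pi := by
  have hπ := Real.pi_pos
  have step : ∀ a v, f a < v → v < L → ∃ b, a < b ∧ f b = v := by
    intro a v hav hv
    obtain ⟨b, hb, hab⟩ := ((hL.eventually (eventually_gt_nhds hv)).and (Filter.eventually_gt_atTop a)).exists
    obtain ⟨c, hc, hcv⟩ := intermediate_value_Ioo hab.le hf.continuousOn
      (show v ∈ Set.Ioo (f a) (f b) from ⟨hav, hb⟩)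
    exact ⟨c, hc.1, hcv⟩
  induction k with
  | zero =>
    obtain ⟨b, hb, hfb⟩ := step 0 ((0 + 1 / 2) * Real.pi) (by rw [hf0]; positivity)
      (by simpa using hk)
    refine ⟨fun _ => b, by simp, fun j hj => ?_⟩
    obtain rfl : j = 0 := by lia
    exact ⟨hb, by simpa using hfb⟩
  | succ k ih =>
    push_cast at hk
    obtain ⟨y, hy, hy'⟩ := ih (by nlinarith)
    obtain ⟨b, hb, hfb⟩ := step (y k) ((k + 1 + 1 / 2) * Real.pi)
      (by rw [(hy' k le_rfl).2]; nlinarith) hk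
    refine ⟨fun j => if j ≤ k then y j else b, fun j hj => ?_, fun j hj => ?_⟩
    · rcases (Nat.lt_succ_iff.mp hj).lt_or_eq with h | rfl
      · simpa [h.le, Nat.succ_le_of_lt h] using hy j h
      · simpa using hb
    · rcases hj.lt_or_eq with h | rfl
      · simpa [Nat.lt_succ_iff.mp h] using hy' j (by lia)
      · simp only [if_neg (show ¬ k + 1 ≤ k by lia)]
        push_cast
        exact ⟨(hy' k le_rfl).1.trans hb, hfb⟩

/-- The square root in the right half plane, with imaginary part `y`, of a complex number with
real part `5 / 2`. -/
noncomputable def halfPlaneRoot (y : ℝ) : ℂ := ⟨√(y ^ 2 + 5 / 2), y⟩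

lemma continuous_halfPlaneRoot : Continuous halfPlaneRoot := by
  have : halfPlaneRoot = fun y : ℝ => (√(y ^ 2 + 5 / 2) : ℂ) + y * Complex.I := by
    funext y
    apply Complex.ext <;> simp [halfPlaneRoot]
  rw [this]
  fun_prop

lemma halfPlaneRoot_re_pos (y : ℝ) : 0 < (halfPlaneRoot y).re :=
  Real.sqrt_pos.mpr (by positivity)

/-- The argument of the dominant term in the closed form for the `n`-th element. -/
noncomputable def dominantAngle (n : ℕ) (y : ℝ) : ℝ :=
  2 * n * (1 + halfPlaneRoot y).arg - (halfPlaneRoot y).arg - (1 + y * Complex.I).arg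

lemma continuous_dominantAngle (n : ℕ) : Continuous (dominantAngle n) := by
  have key : ∀ g : ℝ → ℂ, Continuous g → (∀ y, 0 < (g y).re) → Continuous fun y => (g y).arg :=
    fun g hg hre => continuous_iff_continuousAt.mpr fun y =>
      (Complex.continuousAt_arg (Or.inl (hre y))).comp hg.continuousAt
  have h1 := key (fun y => 1 + halfPlaneRoot y) (continuous_const.add continuous_halfPlaneRoot)
    (fun y => by have := halfPlaneRoot_re_pos y; simp; linarith)
  have h2 := key halfPlaneRoot continuous_halfPlaneRoot halfPlaneRoot_re_pos
  have h3 := key (fun y => 1 + y * Complex.I) (by fun_prop) (fun y => by simp)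
  exact ((continuous_const.mul h1).sub h2).sub h3

lemma dominantAngle_zero (n : ℕ) : dominantAngle n 0 = 0 := by
  have h : halfPlaneRoot 0 = ((√(5 / 2) : ℝ) : ℂ) := by
    apply Complex.ext <;> simp [halfPlaneRoot]
  have h1 : (1 + halfPlaneRoot 0) = ((1 + √(5 / 2) : ℝ) : ℂ) := by rw [h]; push_cast; rfl
  rw [dominantAngle, h1, h, Complex.arg_ofReal_of_nonneg (by positivity),
    Complex.arg_ofReal_of_nonneg (by positivity)]
  simp

lemma tendsto_arg_of_tendsto_div {g : ℝ → ℂ} {l : ℂ} (hl : l ∈ Complex.slitPlane)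
    (h : Filter.Tendsto (fun y : ℝ => ((y⁻¹ : ℝ) : ℂ) * g y) Filter.atTop (nhds l)) :
    Filter.Tendsto (fun y => (g y).arg) Filter.atTop (nhds l.arg) := by
  refine ((Complex.continuousAt_arg hl).tendsto.comp h).congr' ?_
  filter_upwards [Filter.eventually_gt_atTop 0] with y hy
  exact Complex.arg_real_mul _ (inv_pos.mpr hy)

lemma tendsto_dominantAngle (n : ℕ) : Filter.Tendsto (dominantAngle n) Filter.atTop
    (nhds (2 * n * (Real.pi / 4) - Real.pi / 4 - Real.pi / 2)) := by
  have hinv : Filter.Tendsto (fun y : ℝ => ((y⁻¹ : ℝ) : ℂ)) Filter.atTop (nhds 0) :=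
    (Complex.continuous_ofReal.tendsto' 0 0 (by simp)).comp tendsto_inv_atTop_zero
  have hinv' : Filter.Tendsto (fun y : ℝ => √(1 + 5 / 2 * (y⁻¹) ^ 2)) Filter.atTop (nhds 1) := by
    have : Continuous fun u : ℝ => √(1 + 5 / 2 * u ^ 2) := by fun_prop
    exact (this.tendsto' 0 1 (by simp)).comp tendsto_inv_atTop_zero
  have hg : Filter.Tendsto (fun y : ℝ => ((y⁻¹ : ℝ) : ℂ) * halfPlaneRoot y) Filter.atTop
      (nhds (1 + Complex.I)) := by
    have h : Filter.Tendsto (fun y : ℝ => ((√(1 + 5 / 2 * (y⁻¹) ^ 2) : ℝ) : ℂ) + Complex.I)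
        Filter.atTop (nhds (1 + Complex.I)) :=
      ((Complex.continuous_ofReal.tendsto' 1 1 (by simp)).comp hinv').add tendsto_const_nhds
    refine h.congr' ?_
    filter_upwards [Filter.eventually_gt_atTop 0] with y hy
    have hs : √(1 + 5 / 2 * (y⁻¹) ^ 2) = y⁻¹ * √(y ^ 2 + 5 / 2) := by
      rw [show 1 + 5 / 2 * (y⁻¹) ^ 2 = (y⁻¹) ^ 2 * (y ^ 2 + 5 / 2) by field_simp,
        Real.sqrt_mul (by positivity), Real.sqrt_sq (by positivity)]
    apply Complex.ext
    · simp only [Complex.add_re, Complex.ofReal_re, Complex.I_re, Complex.re_ofReal_mul,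
        halfPlaneRoot, hs, add_zero]
    · simp only [Complex.add_im, Complex.ofReal_im, Complex.I_im, Complex.im_ofReal_mul,
        halfPlaneRoot]
      field_simp
      simp
  have harg : (1 + Complex.I).arg = Real.pi / 4 := by
    have h : (1 + Complex.I) = (√2 : ℝ) *
        (Complex.cos ((Real.pi / 4 : ℝ) : ℂ) + Complex.sin ((Real.pi / 4 : ℝ) : ℂ) * Complex.I) := by
      have h2 : √2 * (√2 / 2) = 1 := by
        rw [← mul_div_assoc, Real.mul_self_sqrt (by norm_num)]; norm_num
      rw [← Complex.ofReal_cos, ← Complex.ofReal_sin, Real.cos_pi_div_four,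
        Real.sin_pi_div_four]
      apply Complex.ext <;> simp [-Complex.ofReal_div, h2]
    rw [h, Complex.arg_mul_cos_add_sin_mul_I (by positivity)]
    constructor <;> linarith [Real.pi_pos]
  have hslit : (1 + Complex.I) ∈ Complex.slitPlane := Or.inl (by simp)
  have h1 := tendsto_arg_of_tendsto_div (g := fun y => 1 + halfPlaneRoot y) hslit
    (by simpa [mul_add] using hinv.add hg)
  have h2 := tendsto_arg_of_tendsto_div hslit hg
  have h3 : Filter.Tendsto (fun y : ℝ => (1 + y * Complex.I).arg) Filter.atTop
      (nhds (Complex.I.arg)) := by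
    refine tendsto_arg_of_tendsto_div (Or.inr (by simp)) ?_
    have h : Filter.Tendsto (fun y : ℝ => ((y⁻¹ : ℝ) : ℂ) + Complex.I) Filter.atTop
        (nhds Complex.I) := by simpa using hinv.add_const Complex.I
    refine h.congr' ?_
    filter_upwards [Filter.eventually_gt_atTop 0] with y hy
    have : (y : ℂ) ≠ 0 := by exact_mod_cast hy.ne'
    push_cast
    field_simp
  rw [harg] at h1 h2
  rw [Complex.arg_I] at h3
  exact ((h1.const_mul _).sub h2).sub h3

/-- The dominance of the larger pair of characteristic roots. -/
lemma pow_mul_lt_pow_mul {x y : ℝ} (hx : x ^ 2 = y ^ 2 + 5 / 2) (hx1 : 1 < x) (n : ℕ) :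
    ((x - 1) ^ 2 + y ^ 2) ^ (n + 1) * (x + 1) < ((x + 1) ^ 2 + y ^ 2) ^ (n + 1) * (x - 1) := by
  have h1 : ((x - 1) ^ 2 + y ^ 2) ^ n ≤ ((x + 1) ^ 2 + y ^ 2) ^ n := by
    apply pow_le_pow_left₀ (by positivity)
    nlinarith
  have h2 : ((x - 1) ^ 2 + y ^ 2) * (x + 1) < ((x + 1) ^ 2 + y ^ 2) * (x - 1) := by
    nlinarith
  have h3 : 0 < ((x + 1) ^ 2 + y ^ 2) ^ n := by positivity
  calc ((x - 1) ^ 2 + y ^ 2) ^ (n + 1) * (x + 1)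
      = ((x - 1) ^ 2 + y ^ 2) ^ n * (((x - 1) ^ 2 + y ^ 2) * (x + 1)) := by ring
    _ ≤ ((x + 1) ^ 2 + y ^ 2) ^ n * (((x - 1) ^ 2 + y ^ 2) * (x + 1)) := by gcongr
    _ < ((x + 1) ^ 2 + y ^ 2) ^ n * (((x + 1) ^ 2 + y ^ 2) * (x - 1)) := by gcongr
    _ = _ := by ring

lemma exp_add_half_mul_pi (j : ℕ) :
    Complex.exp (((j + 1 / 2) * Real.pi : ℝ) * Complex.I) = (-1) ^ j * Complex.I := by
  have : (((j + 1 / 2) * Real.pi : ℝ) : ℂ) * Complex.I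
      = j * (Real.pi * Complex.I) + Real.pi / 2 * Complex.I := by push_cast; ring
  rw [this, Complex.exp_add, Complex.exp_nat_mul, Complex.exp_pi_mul_I,
    Complex.exp_pi_div_two_mul_I]

/-- The closed form at `4 - (2y² + 5/2)²` of a solution of the recurrence. -/
lemma closed_form_im {p : ℕ → ℝ} {x y : ℝ} (hx : x ^ 2 = y ^ 2 + 5 / 2) (hx1 : 1 < x) (hy : 0 < y)
    {z : ℝ} (hz : z = 4 - (x ^ 2 + y ^ 2) ^ 2)
    (p0 : p 0 = 0) (p1 : p 1 = 0) (p2 : p 2 = 0) (p3 : p 3 = 1)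
    (hp : ∀ n, p (n + 4) = 14 * p (n + 3) + (2 * z - 49) * p (n + 2)
      + (2 * z + 36) * p (n + 1) + -z ^ 2 * p n) (n : ℕ) {a : ℂ} (ha : a = ⟨x, y⟩) :
    32 * x * y * p n = ((1 + a) ^ (2 * n) / (a * (1 + x) * (1 + y * Complex.I))).im
      + ((1 - a) ^ (2 * n) / (a * (x - 1) * (1 - y * Complex.I))).im := by
  set b : ℂ := ⟨x, -y⟩ with hb
  have hab : (starRingEnd ℂ) a = b := by rw [ha, hb]; rfl
  have hsum : a + b = 2 * x := by rw [ha, hb]; apply Complex.ext <;> simp; ring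
  have hdiff : a - b = 2 * (y * Complex.I) := by rw [ha, hb]; apply Complex.ext <;> simp; ring
  have hI := Complex.I_sq
  have hxC : (x : ℂ) ^ 2 = y ^ 2 + 5 / 2 := by
    have := congrArg (Complex.ofReal) hx
    push_cast at this
    exact this
  have hsq : a ^ 2 + b ^ 2 = 5 := by
    linear_combination (1 / 2) * (a + b + 2 * x) * hsum
      + (1 / 2) * (a - b + 2 * (y * Complex.I)) * hdiff + 2 * (y : ℂ) ^ 2 * hI + 2 * hxC
  have hprod : a * b = x ^ 2 + y ^ 2 := by
    rw [ha, hb]; apply Complex.ext <;> simp [← Complex.ofReal_pow] <;> ring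
  have hzb : (z : ℂ) = (b ^ 2 - 1) * (b ^ 2 - 4) := by
    rw [hz]; push_cast; rw [← hprod]; linear_combination (-b ^ 2) * hsq
  have hza : (z : ℂ) = (a ^ 2 - 1) * (a ^ 2 - 4) := by
    rw [hz]; push_cast; rw [← hprod]; linear_combination (-a ^ 2) * hsq
  have hy0 : (y : ℂ) ≠ 0 := by exact_mod_cast hy.ne'
  have hyI : (y : ℂ) * Complex.I ≠ 0 := mul_ne_zero hy0 Complex.I_ne_zero
  have hx0 : (x : ℂ) ≠ 0 := by exact_mod_cast (by linarith : x ≠ 0)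
  have hxp : (1 + x : ℂ) ≠ 0 := by exact_mod_cast (by linarith : 1 + x ≠ 0)
  have hxm : (x - 1 : ℂ) ≠ 0 := by exact_mod_cast (by linarith : x - 1 ≠ 0)
  have hIp : (1 + y * Complex.I : ℂ) ≠ 0 := fun h => by simpa using congrArg Complex.re h
  have hIm : (1 - y * Complex.I : ℂ) ≠ 0 := fun h => by simpa using congrArg Complex.re h
  have ha0 : a ≠ 0 := fun h => by
    have := congrArg Complex.re h
    simp [ha] at this
    linarith
  have hb0 : b ≠ 0 := fun h => by
    have := congrArg Complex.re h
    simp [hb] at this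
    linarith
  have e12 : (1 + a) ^ 2 - (1 + b) ^ 2 = 4 * (y * Complex.I) * (1 + x) := by
    linear_combination (2 + a + b) * hdiff + 2 * (y * Complex.I) * hsum
  have e13 : (1 + a) ^ 2 - (1 - a) ^ 2 = 4 * a := by ring
  have e14 : (1 + a) ^ 2 - (1 - b) ^ 2 = 4 * x * (1 + y * Complex.I) := by
    linear_combination (2 + a - b) * hsum + 2 * x * hdiff
  have e23 : (1 + b) ^ 2 - (1 - a) ^ 2 = 4 * x * (1 - y * Complex.I) := by
    linear_combination (2 + b - a) * hsum - 2 * x * hdiff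
  have e24 : (1 + b) ^ 2 - (1 - b) ^ 2 = 4 * b := by ring
  have e34 : (1 - a) ^ 2 - (1 - b) ^ 2 = 4 * (y * Complex.I) * (x - 1) := by
    linear_combination (a + b - 2) * hdiff + 2 * (y * Complex.I) * hsum
  have key := linear_recurrence_lagrange (p := fun n => (p n : ℂ)) (A := 14) (B := 2 * z - 49)
    (C := 2 * z + 36) (D := -z ^ 2) (r₁ := (1 + a) ^ 2) (r₂ := (1 + b) ^ 2) (r₃ := (1 - a) ^ 2)
    (r₄ := (1 - b) ^ 2) (by simp [p0]) (by simp [p1]) (by simp [p2]) (by simp [p3])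
    (fun n => by rw [hp n]; push_cast; rfl) (by rw [hza]; ring) (by rw [hzb]; ring)
    (by rw [hza]; ring) (by rw [hzb]; ring)
    (by rw [e12]; simp_all) (by rw [e13]; simp_all) (by rw [e14]; simp_all)
    (by rw [e23]; simp_all) (by rw [e24]; simp_all) (by rw [e34]; simp_all) n
  rw [e12, e13, e14, e23, e24, e34] at key
  simp only [← pow_mul] at key
  set T := (1 + a) ^ (2 * n) / (a * (1 + x) * (1 + y * Complex.I)) with hT
  set U := (1 - a) ^ (2 * n) / (a * (x - 1) * (1 - y * Complex.I)) with hU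
  have cT : (starRingEnd ℂ) T = (1 + b) ^ (2 * n) / (b * (1 + x) * (1 - y * Complex.I)) := by
    simp [hT, hab, ← sub_eq_add_neg]
  have cU : (starRingEnd ℂ) U = (1 - b) ^ (2 * n) / (b * (x - 1) * (1 + y * Complex.I)) := by
    simp [hU, hab]
  have hfin : 64 * x * (y * Complex.I) * p n
      = (T - (starRingEnd ℂ) T) + (U - (starRingEnd ℂ) U) := by
    rw [key, cT, cU, hT, hU]
    field_simp
    ring
  rw [Complex.sub_conj, Complex.sub_conj] at hfin
  have := congrArg Complex.im hfin
  simp at this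
  linarith

/-- At the points where the dominant term is purely imaginary, the solution has the sign of
its imaginary part. -/
lemma sign_at_dominantAngle {p : ℕ → ℝ} {y : ℝ} (hy : 0 < y) {z : ℝ}
    (hz : z = 4 - (2 * y ^ 2 + 5 / 2) ^ 2)
    (p0 : p 0 = 0) (p1 : p 1 = 0) (p2 : p 2 = 0) (p3 : p 3 = 1)
    (hp : ∀ n, p (n + 4) = 14 * p (n + 3) + (2 * z - 49) * p (n + 2)
      + (2 * z + 36) * p (n + 1) + -z ^ 2 * p n) (n j : ℕ)
    (hj : dominantAngle (n + 1) y = (j + 1 / 2) * Real.pi) :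
    0 < (-1) ^ j * p (n + 1) := by
  set x := √(y ^ 2 + 5 / 2) with hxdef
  have hx : x ^ 2 = y ^ 2 + 5 / 2 := Real.sq_sqrt (by positivity)
  have hx0 : 0 ≤ x := Real.sqrt_nonneg _
  have hx1 : 1 < x := by nlinarith [sq_nonneg y]
  have key := closed_form_im hx hx1 hy (by rw [hz, hx]; ring) p0 p1 p2 p3 hp (n + 1)
    (a := halfPlaneRoot y) rfl
  set a := halfPlaneRoot y with ha
  set T := (1 + a) ^ (2 * (n + 1)) / (a * (1 + x) * (1 + y * Complex.I)) with hT
  set U := (1 - a) ^ (2 * (n + 1)) / (a * (x - 1) * (1 - y * Complex.I)) with hU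
  have hn1 : ‖1 + (x : ℂ)‖ = 1 + x := by
    rw [← Complex.ofReal_one, ← Complex.ofReal_add, Complex.norm_real, Real.norm_of_nonneg]
    linarith
  have hn2 : ‖(x : ℂ) - 1‖ = x - 1 := by
    rw [← Complex.ofReal_one, ← Complex.ofReal_sub, Complex.norm_real, Real.norm_of_nonneg]
    linarith
  have hn3 : ‖1 - y * Complex.I‖ = ‖1 + y * Complex.I‖ := by
    rw [← Complex.norm_conj (1 + y * Complex.I)]
    simp [sub_eq_add_neg]
  have hw : 0 < ‖1 + y * Complex.I‖ := norm_pos_iff.mpr fun h => by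
    simpa using congrArg Complex.re h
  have ha0 : 0 < ‖a‖ := norm_pos_iff.mpr fun h => by
    have := halfPlaneRoot_re_pos y
    rw [← ha, h] at this
    simp at this
  have hm1 : ‖1 + a‖ ^ 2 = (x + 1) ^ 2 + y ^ 2 := by
    rw [Complex.sq_norm, Complex.normSq_apply]
    simp [ha, halfPlaneRoot, ← hxdef]
    ring
  have hm2 : ‖1 - a‖ ^ 2 = (x - 1) ^ 2 + y ^ 2 := by
    rw [Complex.sq_norm, Complex.normSq_apply]
    simp [ha, halfPlaneRoot, ← hxdef]
    ring
  have hUT : ‖U‖ < ‖T‖ := by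
    rw [hT, hU]
    simp only [norm_div, norm_mul, norm_pow, hn1, hn2, hn3, pow_mul, hm1, hm2]
    have hlt := pow_mul_lt_pow_mul hx hx1 n
    have hx1' : 0 < x - 1 := by linarith
    rw [div_lt_div_iff₀ (by positivity) (by positivity)]
    have : 0 < ‖a‖ * ‖1 + y * Complex.I‖ := by positivity
    nlinarith
  have hTexp : T = ‖T‖ * ((-1) ^ j * Complex.I) := by
    have hpolar : T = (‖1 + a‖ * Complex.exp ((1 + a).arg * Complex.I)) ^ (2 * (n + 1))
        / ((‖a‖ * Complex.exp (a.arg * Complex.I)) * (1 + x)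
          * (‖1 + y * Complex.I‖ * Complex.exp ((1 + y * Complex.I).arg * Complex.I))) := by
      rw [Complex.norm_mul_exp_arg_mul_I, Complex.norm_mul_exp_arg_mul_I,
        Complex.norm_mul_exp_arg_mul_I]
    have hnorm : ‖T‖ = ‖1 + a‖ ^ (2 * (n + 1)) / (‖a‖ * (1 + x) * ‖1 + y * Complex.I‖) := by
      rw [hT]
      simp only [norm_div, norm_mul, norm_pow, hn1]
    rw [← exp_add_half_mul_pi, ← hj, hnorm, hpolar]
    have : ((dominantAngle (n + 1) y : ℝ) : ℂ) * Complex.I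
        = (2 * (n + 1) : ℕ) * ((1 + a).arg * Complex.I) - a.arg * Complex.I
          - (1 + y * Complex.I).arg * Complex.I := by
      rw [dominantAngle]; push_cast; ring
    rw [this, Complex.exp_sub, Complex.exp_sub, Complex.exp_nat_mul]
    push_cast
    rw [mul_pow]
    simp only [div_eq_mul_inv, mul_inv]
    ring
  have hTim : T.im = (-1) ^ j * ‖T‖ := by
    have h : T = ((‖T‖ * (-1) ^ j : ℝ) : ℂ) * Complex.I := by
      conv_lhs => rw [hTexp]
      push_cast
      ring
    rw [h, Complex.im_ofReal_mul, ← h]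
    simp [mul_comm]
  have hUim : |U.im| < ‖T‖ := (Complex.abs_im_le_norm U).trans_lt hUT
  rw [hTim] at key
  have hxy : 0 < 32 * x * y := by positivity
  rw [abs_lt] at hUim
  refine pos_of_mul_pos_right (a := 32 * x * y) ?_ hxy.le
  rcases neg_one_pow_eq_or ℝ j with h | h <;> rw [h] at key ⊢ <;> linarith

/-- Every zero of the polynomial `P m` (whose generating function is
`∑ P m t^m = 1/(t⁴z² + t³(-2z-36) + t²(49-2z) - 14t + 1)`, i.e. `P 0 = 1`,
`P m = 0` for `m < 0`, and the four-term recurrence holds) is a real number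
lying in the open interval `(-∞, -9/4)`. -/
theorem queen_diagonal_zero_distribution (P : ℤ → Polynomial ℝ)
    (h0 : P 0 = 1)
    (hneg : ∀ m : ℤ, m < 0 → P m = 0)
    (hrec : ∀ m : ℤ, 1 ≤ m →
      P m - 14 * P (m - 1) + (C 49 - 2 * X) * P (m - 2)
        + (-2 * X - 36) * P (m - 3) + X ^ 2 * P (m - 4) = 0) :
    ∀ (m : ℕ) (w : ℂ), aeval w (P m) = 0 → w.im = 0 ∧ w.re < -9/4 := by
  intro m w hw
  set Q : ℕ → ℝ[X] := fun n => P (n - 3) with hQ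
  have q0 : Q 0 = 0 := hneg _ (by norm_num)
  have q1 : Q 1 = 0 := hneg _ (by norm_num)
  have q2 : Q 2 = 0 := hneg _ (by norm_num)
  have q3 : Q 3 = 1 := by simpa [hQ] using h0
  have hQrec : ∀ n, Q (n + 4) = 14 * Q (n + 3) + (2 * X - C 49) * Q (n + 2)
      + (2 * X + 36) * Q (n + 1) - X ^ 2 * Q n := by
    intro n
    have h := hrec (n + 1) (by lia)
    simp only [hQ]
    push_cast
    rw [show (n : ℤ) + 4 - 3 = n + 1 by ring, show (n : ℤ) + 3 - 3 = n + 1 - 1 by ring,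
      show (n : ℤ) + 2 - 3 = n + 1 - 2 by ring, show (n : ℤ) + 1 - 3 = n + 1 - 3 by ring,
      show (n : ℤ) - 3 = n + 1 - 4 by ring]
    linear_combination h
  have hQm : Q (m + 3) = P m := by simp [hQ]
  have hcoeff : ∀ n i, n < 2 * i + 3 → (Q n).coeff i = 0 := by
    intro n
    induction n using Nat.strong_induction_on with
    | _ n ih =>
      intro i hi
      match n with
      | 0 => simp [q0]
      | 1 => simp [q1]
      | 2 => simp [q2]
      | 3 => simp [q3, coeff_one, show i ≠ 0 by lia]
      | n + 4 =>
        have e : Q (n + 4) = C 14 * Q (n + 3) + C 2 * (X * Q (n + 2)) - C 49 * Q (n + 2)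
            + C 2 * (X * Q (n + 1)) + C 36 * Q (n + 1) - X * (X * Q n) := by
          rw [hQrec, show (C 14 : ℝ[X]) = 14 from rfl, show (C 2 : ℝ[X]) = 2 from rfl,
            show (C 36 : ℝ[X]) = 36 from rfl]
          ring
        obtain ⟨i, rfl⟩ : ∃ k, i = k + 1 := ⟨i - 1, by lia⟩
        have hX : (X * Q n).coeff i = 0 := by
          rcases i with _ | i
          · simp
          · rw [coeff_X_mul, ih n (by lia) i (by lia)]
        simp only [e, coeff_add, coeff_sub, coeff_C_mul, coeff_X_mul, hX,
          ih (n + 3) (by lia) (i + 1) (by lia), ih (n + 2) (by lia) i (by lia),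
          ih (n + 2) (by lia) (i + 1) (by lia), ih (n + 1) (by lia) i (by lia),
          ih (n + 1) (by lia) (i + 1) (by lia)]
        simp
  have hdeg : (P m).natDegree ≤ m / 2 := by
    rw [← hQm, natDegree_le_iff_coeff_eq_zero]
    exact fun i hi => hcoeff _ i (by lia)
  have hL : ((m / 2 : ℕ) + 1 / 2) * Real.pi
      < 2 * (m + 3 : ℕ) * (Real.pi / 4) - Real.pi / 4 - Real.pi / 2 := by
    have h : ((m / 2 : ℕ) : ℝ) ≤ m / 2 := Nat.cast_div_le
    push_cast
    nlinarith [Real.pi_pos]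
  obtain ⟨y, hy, hy'⟩ := exists_increasing_preimages (continuous_dominantAngle (m + 3))
    (dominantAngle_zero _) (tendsto_dominantAngle _) (m / 2) hL
  refine real_roots_of_alternating hdeg (fun j => 4 - (2 * y j ^ 2 + 5 / 2) ^ 2) ?_ ?_ ?_ hw
  · intro j hj
    have h1 := hy j hj
    have h2 := (hy' j hj.le).1
    have : 2 * y j ^ 2 + 5 / 2 < 2 * y (j + 1) ^ 2 + 5 / 2 := by gcongr
    have : (2 * y j ^ 2 + 5 / 2) ^ 2 < (2 * y (j + 1) ^ 2 + 5 / 2) ^ 2 := by gcongr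
    simpa using this
  · intro j hj
    have h2 := (hy' j hj).1
    have : 0 < y j ^ 2 := by positivity
    nlinarith
  · intro j hj
    set z := 4 - (2 * y j ^ 2 + 5 / 2) ^ 2 with hz
    rw [← hQm]
    refine sign_at_dominantAngle (p := fun n => (Q n).eval z) (hy' j hj).1 hz (by simp [q0])
      (by simp [q1]) (by simp [q2]) (by simp [q3]) (fun n => ?_) (m + 2) j (hy' j hj).2
    simp [hQrec n]
    ring
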